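/- Let g : [a,b] → ℝ be differentiable and strictly monotone on the compact interval [a,b] with a < b, and suppose there is a constant B ≥ 1 such that |g'(u)| ≤ B·|g'(v)| for all u, v ∈ [a,b]. Then for every subinterval [c,d] ⊆ [a,b] with c < d, (d − c)/(b − a) ≥ (1/B)·|g(d) − g(c)|/|g(b) − g(a)|. -/

import Mathlib

lemma abs_slope_of_lt {𝕜 : Type*} [Field 𝕜] [LinearOrder 𝕜] [IsStrictOrderedRing 𝕜]
    (f : 𝕜 → 𝕜) {x y : 𝕜} (hxy : x < y) :
    |slope f x y| = |f y - f x| / (y - x) := by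
  rw [slope_def_field, abs_div, abs_of_pos (sub_pos.mpr hxy)]

section

open Set

variable {g g' : ℝ → ℝ} {a b c d p q B : ℝ}

lemma exists_mem_Ioo_eq_slope_of_subinterval
    (hcont : ContinuousOn g (Icc a b)) (hderiv : ∀ x ∈ Ioo a b, HasDerivAt g (g' x) x)
    (hac : a ≤ c) (hcd : c < d) (hdb : d ≤ b) :
    ∃ u ∈ Ioo a b, g' u = slope g c d := by
  have hsub : Ioo c d ⊆ Ioo a b := Ioo_subset_Ioo hac hdb
  obtain ⟨u, hu, hslope⟩ := exists_hasDerivAt_eq_slope g g' hcd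
    (hcont.mono (Icc_subset_Icc hac hdb)) fun x hx => hderiv x (hsub hx)
  exact ⟨u, hsub hu, hslope.trans (slope_def_field g c d).symm⟩

lemma abs_slope_le_mul_abs_slope
    (hcont : ContinuousOn g (Icc a b)) (hderiv : ∀ x ∈ Ioo a b, HasDerivAt g (g' x) x)
    (hdist : ∀ u ∈ Ioo a b, ∀ v ∈ Ioo a b, |g' u| ≤ B * |g' v|)
    (hac : a ≤ c) (hcd : c < d) (hdb : d ≤ b) (hap : a ≤ p) (hpq : p < q) (hqb : q ≤ b) :
    |slope g c d| ≤ B * |slope g p q| := by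
  obtain ⟨u, hu, hgu⟩ := exists_mem_Ioo_eq_slope_of_subinterval hcont hderiv hac hcd hdb
  obtain ⟨v, hv, hgv⟩ := exists_mem_Ioo_eq_slope_of_subinterval hcont hderiv hap hpq hqb
  rw [← hgu, ← hgv]
  exact hdist u hu v hv

theorem stmt7_general (hab : a < b)
    (hcont : ContinuousOn g (Icc a b)) (hderiv : ∀ x ∈ Ioo a b, HasDerivAt g (g' x) x)
    (hne : g a ≠ g b) (hdist : ∀ u ∈ Ioo a b, ∀ v ∈ Ioo a b, |g' u| ≤ B * |g' v|)
    (hac : a ≤ c) (hcd : c < d) (hdb : d ≤ b) :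
    (1 / B) * (|g d - g c| / |g b - g a|) ≤ (d - c) / (b - a) := by
  have hba : 0 < b - a := sub_pos.mpr hab
  have hdc : 0 < d - c := sub_pos.mpr hcd
  have hg : 0 < |g b - g a| := abs_sub_pos.mpr hne.symm
  have hslope : 0 < |slope g a b| := by
    rw [abs_slope_of_lt g hab]
    exact div_pos hg hba
  have hB : 0 < B := pos_of_mul_pos_left
    (hslope.trans_le
      (abs_slope_le_mul_abs_slope hcont hderiv hdist le_rfl hab le_rfl le_rfl hab le_rfl))
    hslope.le
  have hcomp : |g d - g c| / (d - c) ≤ B * (|g b - g a| / (b - a)) := by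
    rw [← abs_slope_of_lt g hcd, ← abs_slope_of_lt g hab]
    exact abs_slope_le_mul_abs_slope hcont hderiv hdist hac hcd hdb le_rfl hab le_rfl
  rw [one_div_mul_eq_div, div_le_iff₀' hB, div_le_iff₀ hg]
  calc |g d - g c| ≤ B * (|g b - g a| / (b - a)) * (d - c) := (div_le_iff₀ hdc).mp hcomp
    _ = B * ((d - c) / (b - a)) * |g b - g a| := by ring

end

theorem stmt7 (a b : ℝ) (hab : a < b) (g g' : ℝ → ℝ)
    (hderiv : ∀ x ∈ Set.Icc a b, HasDerivWithinAt g (g' x) (Set.Icc a b) x)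
    (hmono : StrictMonoOn g (Set.Icc a b) ∨ StrictAntiOn g (Set.Icc a b))
    (B : ℝ) (hB : 1 ≤ B)
    (hdist : ∀ u ∈ Set.Icc a b, ∀ v ∈ Set.Icc a b, |g' u| ≤ B * |g' v|) :
    ∀ c d : ℝ, a ≤ c → c < d → d ≤ b →
      (d - c) / (b - a) ≥ (1 / B) * (|g d - g c| / |g b - g a|) := by
  have hinj : Set.InjOn g (Set.Icc a b) := hmono.elim StrictMonoOn.injOn StrictAntiOn.injOn
  have hsub : Set.Ioo a b ⊆ Set.Icc a b := Set.Ioo_subset_Icc_self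
  exact fun c d => stmt7_general hab (fun x hx => (hderiv x hx).continuousWithinAt)
    (fun x hx => (hderiv x (hsub hx)).hasDerivAt (Icc_mem_nhds hx.1 hx.2))
    (hinj.ne (Set.left_mem_Icc.mpr hab.le) (Set.right_mem_Icc.mpr hab.le) hab.ne)
    (fun u hu v hv => hdist u (hsub hu) v (hsub hv))
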